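/- There is a ring homomorphism † : Z(n) → Z(n) determined by †(z_{i,j}) = (−1)^{n(j−i)} z_{n+1−j, n+1−i} for all 1 ≤ i < j ≤ n; it satisfies † ∘ † = id (so † is an involutory ring automorphism), †(z_{1,n}) = z_{1,n}, and z_{1,n} · a = †(a) · z_{1,n} for every a ∈ Z(n). -/

import Mathlib

/-- Index type for the generators `z_{i,j}`, `1 ≤ i < j ≤ n`. -/
abbrev ZIdx (n : ℕ) := {p : ℕ × ℕ // 1 ≤ p.1 ∧ p.1 < p.2 ∧ p.2 ≤ n}

/-- The element `z_{i,j}` of the free algebra, with the conventions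
`z_{a,b} = (-1)^(a-b) z_{b,a}` for `a > b` and `z_{a,a} = 1`. -/
noncomputable def zf (n : ℕ) (i j : ℕ) : FreeAlgebra ℤ (ZIdx n) :=
  if h : 1 ≤ i ∧ i < j ∧ j ≤ n then FreeAlgebra.ι ℤ ⟨(i, j), h⟩
  else if h : 1 ≤ j ∧ j < i ∧ i ≤ n then ((-1 : ℤ) ^ (i - j)) • FreeAlgebra.ι ℤ ⟨(j, i), h⟩
  else if i = j then 1 else 0

/-- The defining relations of the ring `Z(n)`. -/
inductive ZRel (n : ℕ) : FreeAlgebra ℤ (ZIdx n) → FreeAlgebra ℤ (ZIdx n) → Prop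
  | contain (i j i' j' : ℕ) (h1 : 1 ≤ i) (h2 : i < j) (h3 : j ≤ n)
      (h1' : 1 ≤ i') (h2' : i' < j') (h3' : j' ≤ n)
      (hsub : Set.Icc i' j' ⊆ Set.Icc i j) :
      ZRel n (zf n i j * zf n i' j')
        (((-1 : ℤ) ^ ((j - i) * (j' - i'))) • (zf n (i + j - i') (i + j - j') * zf n i j))
  | disj (i j i' j' : ℕ) (h1 : 1 ≤ i) (h2 : i < j) (h3 : j ≤ n)
      (h1' : 1 ≤ i') (h2' : i' < j') (h3' : j' ≤ n)
      (hd : Set.Icc i j ∩ Set.Icc i' j' = ∅) :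
      ZRel n (zf n i j * zf n i' j')
        (((-1 : ℤ) ^ ((j - i) * (j' - i'))) • (zf n i' j' * zf n i j))
  | overlap (i j i' j' : ℕ) (h1 : 1 ≤ i) (h2 : i < j) (h3 : j ≤ n)
      (h1' : 1 ≤ i') (h2' : i' < j') (h3' : j' ≤ n)
      (hne : (Set.Icc i j ∩ Set.Icc i' j').Nonempty)
      (hnc1 : ¬ Set.Icc i' j' ⊆ Set.Icc i j) (hnc2 : ¬ Set.Icc i j ⊆ Set.Icc i' j') :
      ZRel n (zf n i j * zf n i' j') 0

/-- The ring `Z(n)`. -/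
abbrev Zring (n : ℕ) := RingQuot (ZRel n)

/-- The image of the generator `z_{i,j}` in `Z(n)`. -/
noncomputable def zElem (n : ℕ) (i j : ℕ) : Zring n :=
  RingQuot.mkRingHom (ZRel n) (zf n i j)

/-!
The relations of `Z(n)` are homogeneous for `deg z_{i,j} = j - i` and, once the reversed generators
are eliminated, invariant under the reflection of `[1, n]`. So `†`, the reflection followed by
rescaling degree `d` by `(-1)^(n d)`, is well defined. Since `[1, n]` contains every interval, the
containment relation with first factor `z_{1,n}` says that `z_{1,n}` intertwines each generator with
its image under `†`, and the elements which it so intertwines form a subring.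
-/

section Intervals

variable {α : Type*} [LinearOrder α] {a b c d : α}

theorem Icc_inter_Icc_eq_empty_iff (hab : a ≤ b) (hcd : c ≤ d) :
    Set.Icc a b ∩ Set.Icc c d = ∅ ↔ b < c ∨ d < a := by
  rw [Set.Icc_inter_Icc, Set.Icc_eq_empty_iff, sup_le_iff, le_inf_iff, le_inf_iff]
  grind

theorem Icc_overlap_iff (hab : a ≤ b) (hcd : c ≤ d) :
    ((Set.Icc a b ∩ Set.Icc c d).Nonempty ∧ ¬ Set.Icc c d ⊆ Set.Icc a b ∧
      ¬ Set.Icc a b ⊆ Set.Icc c d) ↔ (a < c ∧ c ≤ b ∧ b < d) ∨ (c < a ∧ a ≤ d ∧ d < b) := by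
  rw [Set.nonempty_iff_ne_empty, Ne, Icc_inter_Icc_eq_empty_iff hab hcd,
    Set.Icc_subset_Icc_iff hab, Set.Icc_subset_Icc_iff hcd]
  grind

end Intervals

theorem semiconjBy_map_of_mem_closure {R S : Type*} [NonAssocRing R] [Ring S] {f g : R →+* S}
    {z : S} {s : Set R} (h : ∀ x ∈ s, SemiconjBy z (f x) (g x)) {a : R}
    (ha : a ∈ Subring.closure s) :
    SemiconjBy z (f a) (g a) := by
  induction ha using Subring.closure_induction with
  | mem x hx => exact h x hx
  | zero => simp only [map_zero, SemiconjBy.zero_right]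
  | one => simp only [map_one, SemiconjBy.one_right]
  | add x y _ _ hx hy => simpa only [map_add] using hx.add_right hy
  | neg x _ hx => simpa only [map_neg] using hx.neg_right
  | mul x y _ _ hx hy => simpa only [map_mul] using hx.mul_right hy

/-- The relations of `Z(n)` for a family `w` in an arbitrary ring. Only the values `w i j` with
`1 ≤ i < j ≤ n` matter: in `contain` the factor `w (i + j - i') (i + j - j')` of the presentation,
whose indices decrease, is replaced by its reversal, and the resulting sign is absorbed. -/
structure IsZFamily {A : Type*} [Ring A] (n : ℕ) (w : ℕ → ℕ → A) : Prop where
  contain {i j i' j' : ℕ} (hi : 1 ≤ i) (hii' : i ≤ i') (hij' : i' < j') (hjj' : j' ≤ j)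
    (hj : j ≤ n) :
    w i j * w i' j' =
      (-1 : ℤ) ^ ((j - i + 1) * (j' - i')) • (w (i + j - j') (i + j - i') * w i j)
  disjoint {i j i' j' : ℕ} (hi : 1 ≤ i) (hij : i < j) (hj : j ≤ n) (hi' : 1 ≤ i')
    (hij' : i' < j') (hj' : j' ≤ n) (h : j < i' ∨ j' < i) :
    w i j * w i' j' = (-1 : ℤ) ^ ((j - i) * (j' - i')) • (w i' j' * w i j)
  overlap {i j i' j' : ℕ} (hi : 1 ≤ i) (hj : j ≤ n) (hi' : 1 ≤ i') (hj' : j' ≤ n)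
    (h : (i < i' ∧ i' ≤ j ∧ j < j') ∨ (i' < i ∧ i ≤ j' ∧ j' < j)) :
    w i j * w i' j' = 0

theorem zf_of_lt {n i j : ℕ} (hi : 1 ≤ i) (hij : i < j) (hj : j ≤ n) :
    zf n i j = FreeAlgebra.ι ℤ ⟨(i, j), hi, hij, hj⟩ :=
  dif_pos ⟨hi, hij, hj⟩

theorem zf_swap {n i j : ℕ} (hi : 1 ≤ i) (hij : i < j) (hj : j ≤ n) :
    zf n j i = (-1 : ℤ) ^ (j - i) • zf n i j := by
  rw [zf_of_lt hi hij hj, zf, dif_neg (by omega), dif_pos ⟨hi, hij, hj⟩]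

theorem zRel_contain_rhs_eq {n i j i' j' : ℕ} (hi : 1 ≤ i) (hii' : i ≤ i') (hij' : i' < j')
    (hjj' : j' ≤ j) (hj : j ≤ n) :
    (-1 : ℤ) ^ ((j - i) * (j' - i')) • (zf n (i + j - i') (i + j - j') * zf n i j) =
      (-1 : ℤ) ^ ((j - i + 1) * (j' - i')) •
        (zf n (i + j - j') (i + j - i') * zf n i j) := by
  rw [zf_swap (by omega) (by omega) (by omega), smul_mul_assoc, smul_smul, ← pow_add,
    show i + j - i' - (i + j - j') = j' - i' by omega, add_one_mul]

theorem isZFamily_zElem (n : ℕ) : IsZFamily n (zElem n) where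
  contain {i j i' j'} hi hii' hij' hjj' hj := by
    have h := RingQuot.mkRingHom_rel (ZRel.contain (n := n) i j i' j' hi (by omega) hj (by omega)
      hij' (by omega) (Set.Icc_subset_Icc hii' hjj'))
    rwa [zRel_contain_rhs_eq hi hii' hij' hjj' hj, map_mul, map_zsmul, map_mul] at h
  disjoint {i j i' j'} hi hij hj hi' hij' hj' hd := by
    have h := RingQuot.mkRingHom_rel (ZRel.disj i j i' j' hi hij hj hi' hij' hj'
      ((Icc_inter_Icc_eq_empty_iff hij.le hij'.le).2 hd))
    rwa [map_mul, map_zsmul, map_mul] at h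
  overlap {i j i' j'} hi hj hi' hj' ho := by
    have hij : i < j := by omega
    have hij' : i' < j' := by omega
    obtain ⟨hne, hnc, hnc'⟩ := (Icc_overlap_iff hij.le hij'.le).2 ho
    have h := RingQuot.mkRingHom_rel
      (ZRel.overlap i j i' j' hi hij hj hi' hij' hj' hne hnc hnc')
    rwa [map_mul, map_zero] at h

theorem Zring.closure_zElem (n : ℕ) :
    Subring.closure {x | ∃ i j, 1 ≤ i ∧ i < j ∧ j ≤ n ∧ zElem n i j = x} = ⊤ := by
  refine (Subring.eq_top_iff' _).2 fun a => ?_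
  obtain ⟨x, rfl⟩ := RingQuot.mkRingHom_surjective (ZRel n) a
  induction x using FreeAlgebra.induction with
  | grade0 k =>
    rw [eq_intCast (algebraMap ℤ (FreeAlgebra ℤ (ZIdx n))), map_intCast]
    exact intCast_mem _ k
  | grade1 p =>
    obtain ⟨⟨i, j⟩, hi, hij, hj⟩ := p
    exact Subring.subset_closure ⟨i, j, hi, hij, hj, congrArg _ (zf_of_lt hi hij hj)⟩
  | mul x y hx hy => rw [map_mul]; exact mul_mem hx hy
  | add x y hx hy => rw [map_add]; exact add_mem hx hy

theorem Zring.ringHom_ext {A : Type*} [Ring A] {n : ℕ} {f g : Zring n →+* A}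
    (h : ∀ i j, 1 ≤ i → i < j → j ≤ n → f (zElem n i j) = g (zElem n i j)) : f = g := by
  refine RingHom.eq_of_eqOn_set_dense (Zring.closure_zElem n) ?_
  rintro _ ⟨i, j, hi, hij, hj, rfl⟩
  exact h i j hi hij hj

namespace IsZFamily

variable {A : Type*} [Ring A] {n : ℕ} {w : ℕ → ℕ → A}

theorem rescale {k : Type*} [CommSemiring k] [Algebra k A] (hw : IsZFamily n w) (c : k) :
    IsZFamily n fun i j => c ^ (j - i) • w i j where
  contain {i j i' j'} hi hii' hij' hjj' hj := by
    rw [smul_mul_smul_comm, smul_mul_smul_comm, hw.contain hi hii' hij' hjj' hj,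
      show i + j - i' - (i + j - j') = j' - i' by omega, mul_comm (c ^ _), smul_comm]
  disjoint hi hij hj hi' hij' hj' h := by
    rw [smul_mul_smul_comm, smul_mul_smul_comm, hw.disjoint hi hij hj hi' hij' hj' h,
      mul_comm (c ^ _), smul_comm]
  overlap hi hj hi' hj' h := by
    rw [smul_mul_smul_comm, hw.overlap hi hj hi' hj' h, smul_zero]

theorem reflect (hw : IsZFamily n w) : IsZFamily n fun i j => w (n + 1 - j) (n + 1 - i) where
  contain {i j i' j'} hi hii' hij' hjj' hj := by
    have h := hw.contain (i := n + 1 - j) (j := n + 1 - i) (i' := n + 1 - j') (j' := n + 1 - i')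
      (by omega) (by omega) (by omega) (by omega) (by omega)
    rwa [show n + 1 - i - (n + 1 - j) = j - i by omega,
      show n + 1 - i' - (n + 1 - j') = j' - i' by omega,
      show n + 1 - j + (n + 1 - i) - (n + 1 - i') = n + 1 - (i + j - i') by omega,
      show n + 1 - j + (n + 1 - i) - (n + 1 - j') = n + 1 - (i + j - j') by omega] at h
  disjoint {i j i' j'} hi hij hj hi' hij' hj' hd := by
    have h := hw.disjoint (i := n + 1 - j) (j := n + 1 - i) (i' := n + 1 - j') (j' := n + 1 - i')
      (by omega) (by omega) (by omega) (by omega) (by omega) (by omega) (by omega)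
    rwa [show n + 1 - i - (n + 1 - j) = j - i by omega,
      show n + 1 - i' - (n + 1 - j') = j' - i' by omega] at h
  overlap hi hj hi' hj' h :=
    hw.overlap (by omega) (by omega) (by omega) (by omega) (by omega)

theorem map_eq_map_of_zRel (hw : IsZFamily n w) {φ : FreeAlgebra ℤ (ZIdx n) →+* A}
    (hφ : ∀ i j, 1 ≤ i → i < j → j ≤ n → φ (zf n i j) = w i j)
    ⦃x y : FreeAlgebra ℤ (ZIdx n)⦄ (h : ZRel n x y) : φ x = φ y := by
  cases h with
  | contain i j i' j' hi hij hj hi' hij' hj' hsub =>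
    obtain ⟨hii', hjj'⟩ := (Set.Icc_subset_Icc_iff hij'.le).1 hsub
    rw [zRel_contain_rhs_eq hi hii' hij' hjj' hj, map_mul, map_zsmul, map_mul, hφ i j hi hij hj,
      hφ i' j' hi' hij' hj', hφ _ _ (by omega) (by omega) (by omega)]
    exact hw.contain hi hii' hij' hjj' hj
  | disj i j i' j' hi hij hj hi' hij' hj' hd =>
    rw [map_mul, map_zsmul, map_mul, hφ i j hi hij hj, hφ i' j' hi' hij' hj']
    exact hw.disjoint hi hij hj hi' hij' hj' ((Icc_inter_Icc_eq_empty_iff hij.le hij'.le).1 hd)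
  | overlap i j i' j' hi hij hj hi' hij' hj' hne hnc hnc' =>
    rw [map_mul, map_zero, hφ i j hi hij hj, hφ i' j' hi' hij' hj']
    exact hw.overlap hi hj hi' hj' ((Icc_overlap_iff hij.le hij'.le).1 ⟨hne, hnc, hnc'⟩)

theorem freeLift_zf {i j : ℕ} (hi : 1 ≤ i) (hij : i < j) (hj : j ≤ n) :
    FreeAlgebra.lift ℤ (fun p : ZIdx n => w p.1.1 p.1.2) (zf n i j) = w i j := by
  rw [zf_of_lt hi hij hj, FreeAlgebra.lift_ι_apply]

/-- The universal property of `Z(n)`: the ring homomorphism `z_{i,j} ↦ w i j` defined by a family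
satisfying the relations. -/
noncomputable def lift (hw : IsZFamily n w) : Zring n →+* A :=
  RingQuot.lift ⟨(FreeAlgebra.lift ℤ fun p : ZIdx n => w p.1.1 p.1.2 : _ →ₐ[ℤ] A),
    hw.map_eq_map_of_zRel fun _ _ => freeLift_zf⟩

theorem lift_zElem (hw : IsZFamily n w) {i j : ℕ} (hi : 1 ≤ i) (hij : i < j) (hj : j ≤ n) :
    hw.lift (zElem n i j) = w i j := by
  rw [lift, zElem, RingQuot.lift_mkRingHom_apply]
  exact freeLift_zf hi hij hj

end IsZFamily

namespace Zring

/-- The involution `†` of `Z(n)`: up to sign it reflects the intervals `[i, j]` inside `[1, n]`. -/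
noncomputable def dagger (n : ℕ) : Zring n →+* Zring n :=
  ((isZFamily_zElem n).reflect.rescale ((-1 : ℤ) ^ n)).lift

variable {n : ℕ}

theorem dagger_zElem (i j : ℕ) (hi : 1 ≤ i) (hij : i < j) (hj : j ≤ n) :
    dagger n (zElem n i j) =
      (-1 : ℤ) ^ (n * (j - i)) • zElem n (n + 1 - j) (n + 1 - i) := by
  rw [pow_mul]
  exact IsZFamily.lift_zElem _ hi hij hj

theorem dagger_comp_dagger (n : ℕ) : (dagger n).comp (dagger n) = RingHom.id (Zring n) := by
  refine ringHom_ext fun i j hi hij hj => ?_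
  rw [RingHom.comp_apply, RingHom.id_apply, dagger_zElem i j hi hij hj, map_zsmul,
    dagger_zElem _ _ (by omega) (by omega) (by omega), smul_smul,
    show n + 1 - i - (n + 1 - j) = j - i by omega, show n + 1 - (n + 1 - i) = i by omega,
    show n + 1 - (n + 1 - j) = j by omega, ← pow_add, Even.neg_one_pow ⟨_, rfl⟩, one_smul]

theorem dagger_zElem_one_self (hn : 2 ≤ n) : dagger n (zElem n 1 n) = zElem n 1 n := by
  rw [dagger_zElem 1 n le_rfl hn le_rfl, Even.neg_one_pow (Nat.even_mul_pred_self n), one_smul,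
    Nat.add_sub_cancel_left, Nat.add_sub_cancel]

theorem semiconjBy_zElem_dagger_zElem {i j : ℕ} (hi : 1 ≤ i) (hij : i < j) (hj : j ≤ n) :
    SemiconjBy (zElem n 1 n) (zElem n i j) (dagger n (zElem n i j)) := by
  rw [SemiconjBy, (isZFamily_zElem n).contain le_rfl hi hij hj le_rfl, dagger_zElem i j hi hij hj,
    smul_mul_assoc, Nat.sub_add_cancel (by omega), Nat.add_comm 1 n]

theorem semiconjBy_zElem_dagger (a : Zring n) :
    SemiconjBy (zElem n 1 n) a (dagger n a) := by
  refine semiconjBy_map_of_mem_closure (f := RingHom.id (Zring n)) ?_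
    (closure_zElem n ▸ Subring.mem_top a)
  rintro _ ⟨i, j, hi, hij, hj, rfl⟩
  exact semiconjBy_zElem_dagger_zElem hi hij hj

end Zring

/-- There is a ring homomorphism `† : Z(n) → Z(n)` with
`†(z_{i,j}) = (-1)^(n(j-i)) z_{n+1-j, n+1-i}` for all `1 ≤ i < j ≤ n`; it is an involution,
fixes `z_{1,n}`, and satisfies `z_{1,n} · a = †(a) · z_{1,n}` for all `a`. -/
theorem Zring_dagger_automorphism (n : ℕ) (hn : 2 ≤ n) :
    ∃ f : Zring n →+* Zring n,
      (∀ i j : ℕ, 1 ≤ i → i < j → j ≤ n →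
        f (zElem n i j) = ((-1 : ℤ) ^ (n * (j - i))) • zElem n (n + 1 - j) (n + 1 - i)) ∧
      (∀ a : Zring n, f (f a) = a) ∧
      f (zElem n 1 n) = zElem n 1 n ∧
      (∀ a : Zring n, zElem n 1 n * a = f a * zElem n 1 n) := by
  exact ⟨Zring.dagger n, Zring.dagger_zElem, DFunLike.congr_fun (Zring.dagger_comp_dagger n),
    Zring.dagger_zElem_one_self hn, Zring.semiconjBy_zElem_dagger⟩
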